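/- Let d ≥ 1 and fix N with 1 ≤ N ≤ d. For every partition ω of d whose number of parts is at least N, the monomial symmetric polynomial m_ω in the polynomial ring ℤ[t_1, …, t_d] lies in the ideal generated by the elementary symmetric polynomials σ_N, σ_{N+1}, …, σ_d. -/

import Mathlib

/-!
Write a symmetric polynomial `p` as `F(σ₁, …, σ_d)`. If every monomial of `p` involves more than `n`
variables, then `p` vanishes once all but `n` of the variables are set to zero. Under this
substitution `σ₁, …, σₙ` become the elementary symmetric polynomials in the remaining variables and
`σₙ₊₁, …, σ_d` become `0`, so algebraic independence of the former gives
`F(y₁, …, yₙ, 0, …, 0) = 0`. Hence `F` lies in the ideal `(yₙ₊₁, …, y_d)`, and `p` in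
`(σₙ₊₁, …, σ_d)`.
-/

open MvPolynomial Finset

section KillCompl

variable {σ τ R : Type*} [CommSemiring R] {f : σ → τ} (hf : Function.Injective f)

theorem killCompl_X_apply (i : σ) : killCompl hf (X (f i) : MvPolynomial τ R) = X i := by
  rw [← rename_X, killCompl_rename_app]

theorem killCompl_X_of_notMem_range {j : τ} (hj : j ∉ Set.range f) :
    killCompl hf (X j : MvPolynomial τ R) = 0 := by
  rw [killCompl, aeval_X, dif_neg hj]

theorem killCompl_eq_zero_iff_mem_span_X {p : MvPolynomial τ R} :
    killCompl hf p = 0 ↔ p ∈ Ideal.span (X '' (Set.range f)ᶜ) := by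
  rw [mem_ideal_span_X_image]
  constructor
  · intro hp m hm
    by_contra! h
    have hsupp : (m.support : Set τ) ⊆ Set.range f := fun j hj ↦
      by_contra fun hjf ↦ Finsupp.mem_support_iff.mp hj (h j hjf)
    rw [mem_support_iff, ← Finsupp.mapDomain_comapDomain f hf m hsupp, ← coeff_killCompl hf, hp,
      coeff_zero] at hm
    exact hm rfl
  · intro h
    ext s
    rw [coeff_killCompl, coeff_zero, ← notMem_support_iff]
    intro hs
    obtain ⟨j, hj, hsj⟩ := h _ hs
    exact hsj (Finsupp.mapDomain_of_notMem_range s j hj)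

variable [Fintype σ]

theorem killCompl_eq_zero_of_card_lt_card_support {p : MvPolynomial τ R}
    (hp : ∀ m ∈ p.support, Fintype.card σ < #m.support) : killCompl hf p = 0 := by
  rw [killCompl_eq_zero_iff_mem_span_X, mem_ideal_span_X_image]
  intro m hm
  obtain ⟨j, hjm, hj⟩ : ∃ j ∈ m.support, j ∉ univ.map ⟨f, hf⟩ :=
    exists_mem_notMem_of_card_lt_card (by simpa using hp m hm)
  exact ⟨j, by simpa using hj, Finsupp.mem_support_iff.mp hjm⟩

variable [Fintype τ]

theorem killCompl_esymm (k : ℕ) : killCompl hf (esymm τ R k) = esymm σ R k := by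
  have hmono : powersetCard k (univ.map ⟨f, hf⟩) ⊆ powersetCard k (univ : Finset τ) :=
    powersetCard_mono (subset_univ _)
  simp only [esymm, map_sum, map_prod]
  rw [← sum_subset hmono]
  · simp only [powersetCard_map, sum_map, RelEmbedding.coe_toEmbedding, mapEmbedding_apply,
      prod_map, Function.Embedding.coeFn_mk, killCompl_X_apply]
  · intro t ht ht'
    obtain ⟨j, hjt, hj⟩ : ∃ j ∈ t, j ∉ univ.map ⟨f, hf⟩ := by
      rw [← not_subset]
      exact fun h ↦ ht' (mem_powersetCard.mpr ⟨h, (mem_powersetCard.mp ht).2⟩)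
    exact prod_eq_zero hjt (killCompl_X_of_notMem_range hf (by simpa using hj))

theorem killCompl_esymmAlgHom {n : ℕ} (F : MvPolynomial (Fin n) R) :
    killCompl hf (esymmAlgHom τ R n F : MvPolynomial τ R) = esymmAlgHom σ R n F := by
  simp only [esymmAlgHom_apply, comp_aeval_apply, killCompl_esymm]

end KillCompl

section Esymm

variable {σ τ R : Type*} [Fintype σ] [Fintype τ]

theorem esymm_eq_zero_of_card_lt [CommSemiring R] {k : ℕ} (hk : Fintype.card σ < k) :
    esymm σ R k = 0 := by
  rw [esymm, powersetCard_eq_empty.mpr hk, sum_empty]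

theorem esymmAlgHom_killCompl_castLE [CommSemiring R] {n : ℕ} (hn : Fintype.card σ ≤ n)
    (F : MvPolynomial (Fin n) R) :
    esymmAlgHom σ R (Fintype.card σ) (killCompl (Fin.castLE_injective hn) F) =
      esymmAlgHom σ R n F := by
  rw [← AlgHom.comp_apply]
  congr 1
  ext i : 2
  by_cases hi : i ∈ Set.range (Fin.castLE hn)
  · obtain ⟨j, rfl⟩ := hi
    simp [esymmAlgHom, killCompl_X_apply]
  · have hcard : Fintype.card σ < i + 1 := by simpa [Nat.lt_succ_iff] using hi
    simp [esymmAlgHom, killCompl_X_of_notMem_range _ hi, esymm_eq_zero_of_card_lt hcard]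

theorem mem_span_esymm_of_killCompl_eq_zero [CommRing R] {f : σ → τ} (hf : Function.Injective f)
    {p : MvPolynomial τ R} (hp : p.IsSymmetric) (hpf : killCompl hf p = 0) :
    p ∈ Ideal.span (esymm τ R '' Set.Ioc (Fintype.card σ) (Fintype.card τ)) := by
  have hcard : Fintype.card σ ≤ Fintype.card τ := Fintype.card_le_of_injective f hf
  obtain ⟨F, hF⟩ := esymmAlgHom_surjective R le_rfl ⟨p, hp⟩
  obtain rfl : (esymmAlgHom τ R _ F : MvPolynomial τ R) = p := congrArg Subtype.val hF
  have hF0 : killCompl (Fin.castLE_injective hcard) F = 0 := by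
    apply esymmAlgHom_injective (σ := σ) R le_rfl
    rw [esymmAlgHom_killCompl_castLE, map_zero, ← Subalgebra.coe_eq_zero,
      ← killCompl_esymmAlgHom hf, hpf]
  have hmem := Ideal.mem_map_of_mem (aeval fun i : Fin (Fintype.card τ) ↦ esymm τ R (i + 1))
    ((killCompl_eq_zero_iff_mem_span_X _).mp hF0)
  rw [Ideal.map_span, ← esymmAlgHom_apply] at hmem
  refine Ideal.span_mono ?_ hmem
  rintro _ ⟨_, ⟨i, hi, rfl⟩, rfl⟩
  have hi' : Fintype.card σ ≤ i := by simpa using hi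
  exact ⟨i + 1, ⟨Nat.lt_succ_of_le hi', i.isLt⟩, by rw [aeval_X]⟩

theorem mem_span_esymm_of_le_card_support [CommRing R] {N : ℕ} {p : MvPolynomial σ R}
    (hp : p.IsSymmetric) (hN : ∀ m ∈ p.support, N ≤ #m.support) :
    p ∈ Ideal.span (esymm σ R '' Set.Icc N (Fintype.card σ)) := by
  obtain _ | n := N
  · have hone : (1 : MvPolynomial σ R) ∈ esymm σ R '' Set.Icc 0 (Fintype.card σ) :=
      ⟨0, by simp, esymm_zero σ R⟩
    rw [Ideal.eq_top_of_isUnit_mem _ (Ideal.subset_span hone) isUnit_one]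
    trivial
  obtain hn | hn := le_or_gt n (Fintype.card σ)
  · obtain ⟨f⟩ : Nonempty (Fin n ↪ σ) :=
      Function.Embedding.nonempty_of_card_le (by simpa using hn)
    have hpf : killCompl f.injective p = 0 :=
      killCompl_eq_zero_of_card_lt_card_support _ fun m hm ↦ by
        simpa only [Fintype.card_fin, ← Nat.succ_le_iff] using hN m hm
    simpa only [Fintype.card_fin, Set.Icc_add_one_left_eq_Ioc] using
      mem_span_esymm_of_killCompl_eq_zero f.injective hp hpf
  · have hp0 : p = 0 := support_eq_empty.mp <| eq_empty_of_forall_notMem fun m hm ↦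
      absurd ((hN m hm).trans (card_le_univ _)) (by omega)
    exact hp0 ▸ zero_mem _

end Esymm

section Msymm

variable {σ R : Type*} [DecidableEq σ]

theorem prod_map_X_eq_monomial_toFinsupp [CommSemiring R] (s : Multiset σ) :
    (s.map X).prod = (monomial (Multiset.toFinsupp s) 1 : MvPolynomial σ R) := by
  induction s using Multiset.induction_on with
  | empty => simp
  | cons i s ih =>
    rw [Multiset.map_cons, Multiset.prod_cons, ih, ← Multiset.singleton_add, map_add,
      Multiset.toFinsupp_singleton, X, monomial_mul, one_mul]

theorem card_support_of_mem_support_msymm [CommSemiring R] [Fintype σ] {n : ℕ}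
    {μ : n.Partition} {m : σ →₀ ℕ} (hm : m ∈ (msymm σ R μ).support) :
    #m.support = μ.parts.card := by
  obtain ⟨⟨s, rfl⟩, -, hs⟩ := mem_biUnion.mp (support_sum hm)
  rw [prod_map_X_eq_monomial_toFinsupp] at hs
  obtain rfl : m = Multiset.toFinsupp s.1 := mem_singleton.mp (support_monomial_subset hs)
  rw [Multiset.toFinsupp_support, Nat.Partition.ofSym, Multiset.card_map, Multiset.card_toFinset]

theorem msymm_mem_ideal_span_esymm_general [CommRing R] [Fintype σ] {n N : ℕ} (μ : n.Partition)
    (hμ : N ≤ μ.parts.card) :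
    msymm σ R μ ∈ Ideal.span (esymm σ R '' Set.Icc N (Fintype.card σ)) :=
  mem_span_esymm_of_le_card_support (msymm_isSymmetric σ R μ) fun _ hm ↦
    hμ.trans_eq (card_support_of_mem_support_msymm hm).symm

end Msymm

/-- Let `d ≥ 1` and fix `N` with `1 ≤ N ≤ d`.  For every partition `ω`
of `d` with at least `N` parts, the monomial symmetric polynomial `m_ω` in
`ℤ[t_1, …, t_d]` lies in the ideal generated by the elementary symmetric polynomials
`σ_N, σ_{N+1}, …, σ_d`. -/
theorem msymm_mem_ideal_span_esymm
    (d : ℕ) (hd : 1 ≤ d) (N : ℕ) (hN1 : 1 ≤ N) (hNd : N ≤ d)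
    (ω : Nat.Partition d) (hω : N ≤ Multiset.card ω.parts) :
    MvPolynomial.msymm (Fin d) ℤ ω ∈
      Ideal.span ((fun k => MvPolynomial.esymm (Fin d) ℤ k) '' Set.Icc N d) := by
  simpa only [Fintype.card_fin] using
    msymm_mem_ideal_span_esymm_general (σ := Fin d) (R := ℤ) ω hω
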